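/- Let X be a nonzero real Banach space and Y an infinite-dimensional real Banach space. Then there exists a function F : [a,b] → L(X,Y) of bounded semivariation on [a,b] whose variation is infinite, i.e., SV_a^b(F) < ∞ and var_a^b(F) = ∞. -/

import Mathlib

open Filter Topology

/-- A division `a = α 0 < α 1 < … < α n = b` of the interval `[a,b]`. -/
def IsDivision (a b : ℝ) (n : ℕ) (α : ℕ → ℝ) : Prop :=
  α 0 = a ∧ α n = b ∧ ∀ i < n, α i < α (i + 1)

/-- The semivariation `SV_a^b(F)` of `F : [a,b] → L(X,Y)`. -/
noncomputable def semivar {X Y : Type*} [NormedAddCommGroup X] [NormedSpace ℝ X]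
    [NormedAddCommGroup Y] [NormedSpace ℝ Y]
    (a b : ℝ) (F : ℝ → X →L[ℝ] Y) : ENNReal :=
  ⨆ (n : ℕ) (α : ℕ → ℝ) (_ : IsDivision a b n α)
    (x : ℕ → X) (_ : ∀ j, ‖x j‖ ≤ 1),
    ENNReal.ofReal ‖∑ j ∈ Finset.range n, (F (α (j + 1)) - F (α j)) (x j)‖

/-- The (Jordan) variation `var_a^b(G)` of a function with values in a normed space. -/
noncomputable def evar {E : Type*} [NormedAddCommGroup E] (a b : ℝ) (G : ℝ → E) : ENNReal :=
  ⨆ (n : ℕ) (α : ℕ → ℝ) (_ : IsDivision a b n α),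
    ENNReal.ofReal (∑ j ∈ Finset.range n, ‖G (α (j + 1)) - G (α j)‖)

/-!
By the Dvoretzky–Rogers argument, an infinite-dimensional normed space `Y` contains a sequence `y`
whose combinations with coefficients in `[-1, 1]` are uniformly bounded although `∑ ‖y i‖ = ∞`.
Let `u : ℝ²ⁿ → Y` maximize the determinant under `‖u‖ ≤ 1`, and let `P` be the orthogonal
projection onto a subspace of dimension at least `n`. Since `det (1 + P) ≥ 2ⁿ`, maximality makes
`‖u ∘ (1 + P)‖` at least `√2`, so `u` is not small on that subspace. Choosing unit vectors
successively in orthogonal complements gives `n` orthonormal vectors with images of norm at least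
`1 / 4`, while orthogonality bounds the combinations of these images by `√n`. For `n = 4ᵏ`, scaled
by `4⁻ᵏ`, the bounds `2⁻ᵏ` are summable and the sums of norms stay at least `1 / 4`.

Place the vectors `y i` as isolated values at every second term of an increasing sequence in
`[a, b)`, with value `0` elsewhere, and multiply by a norm-one functional `φ` on `X`. The points of
a division are distinct, so a sum in the semivariation is a difference of two bounded combinations
of `y`, whereas the variation along the sequence is at least `∑ ‖y i‖`.
-/

theorem det_id_add_of_isProj {𝕜 E : Type*} [Field 𝕜] [AddCommGroup E] [Module 𝕜 E]
    [FiniteDimensional 𝕜 E] {K : Submodule 𝕜 E} {P : E →ₗ[𝕜] E} (hP : LinearMap.IsProj K P) :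
    LinearMap.det (LinearMap.id + P) = 2 ^ Module.finrank 𝕜 K := by
  let e := K.prodEquivOfIsCompl (LinearMap.ker P) hP.isCompl
  let D : K × LinearMap.ker P →ₗ[𝕜] K × LinearMap.ker P :=
    LinearMap.prodMap ((2 : 𝕜) • LinearMap.id) LinearMap.id
  have hD : D = LinearMap.id + LinearMap.prodMap LinearMap.id 0 := by
    ext <;> simp [D, two_smul]
  have h_conj : LinearMap.id + P = e.conj D := by
    rw [hD, map_add, LinearEquiv.conj_id, ← hP.eq_conj_prodMap]
  calc LinearMap.det (LinearMap.id + P) = LinearMap.det D := by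
        rw [h_conj, LinearEquiv.conj_apply, LinearMap.comp_assoc]
        exact LinearMap.det_conj D e
    _ = 2 ^ Module.finrank 𝕜 K := by simp [D, LinearMap.det_prodMap]

theorem exists_continuousLinearMap_injective {E Y : Type*}
    [NormedAddCommGroup E] [NormedSpace ℝ E] [FiniteDimensional ℝ E]
    [NormedAddCommGroup Y] [NormedSpace ℝ Y] (hY : ¬ FiniteDimensional ℝ Y) :
    ∃ f : E →L[ℝ] Y, Function.Injective f := by
  have hE_lt : Module.rank ℝ E < Cardinal.aleph0 := Module.rank_lt_aleph0_iff.2 inferInstance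
  have hY_ge : Cardinal.aleph0 ≤ Module.rank ℝ Y := not_lt.1 (Module.rank_lt_aleph0_iff.not.2 hY)
  obtain ⟨f, hf⟩ := lift_rank_le_iff_exists_linearMap.1
    ((Cardinal.lift_le_aleph0.2 hE_lt.le).trans (Cardinal.aleph0_le_lift.2 hY_ge))
  exact ⟨f.toContinuousLinearMap, hf⟩

/-- `u` has norm at most one, and no `B` with `‖u ∘ B‖ ≤ 1` increases volumes. For injective `u` on
a Euclidean space this says that `u` maps the unit ball onto the ellipsoid of maximal volume (the
John ellipsoid) in the unit ball of its range. -/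
structure IsJohnMap {E Y : Type*} [NormedAddCommGroup E] [NormedSpace ℝ E]
    [NormedAddCommGroup Y] [NormedSpace ℝ Y] (u : E →L[ℝ] Y) : Prop where
  norm_le_one : ‖u‖ ≤ 1
  abs_det_le_one : ∀ B : E →L[ℝ] E, ‖u ∘L B‖ ≤ 1 → |B.det| ≤ 1

section IsJohnMap

variable {E Y : Type*} [NormedAddCommGroup Y] [NormedSpace ℝ Y]

theorem isCompact_setOf_norm_comp_le_one {W : Type*} [NormedAddCommGroup W] [NormedSpace ℝ W]
    [FiniteDimensional ℝ W] [NormedAddCommGroup E] [NormedSpace ℝ E] [FiniteDimensional ℝ E]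
    {f : E →L[ℝ] Y} (hf : Function.Injective f) : IsCompact {A : W →L[ℝ] E | ‖f ∘L A‖ ≤ 1} := by
  obtain ⟨c, -, hc⟩ := (f : E →ₗ[ℝ] Y).injective_iff_antilipschitz.1 hf
  have : ProperSpace (W →L[ℝ] E) := FiniteDimensional.proper ℝ _
  refine Metric.isCompact_of_isClosed_isBounded (isClosed_le (by fun_prop) continuous_const) ?_
  refine isBounded_iff_forall_norm_le.2 ⟨c, fun A hA ↦ A.opNorm_le_bound c.2 fun x ↦ ?_⟩
  calc ‖A x‖ ≤ c * ‖f (A x)‖ := by simpa using hc.le_mul_dist (A x) 0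
    _ ≤ c * ‖x‖ := by
      gcongr
      simpa using (f ∘L A).le_of_opNorm_le hA x

theorem exists_isJohnMap [NormedAddCommGroup E] [NormedSpace ℝ E] [FiniteDimensional ℝ E]
    (hY : ¬ FiniteDimensional ℝ Y) : ∃ u : E →L[ℝ] Y, IsJohnMap u := by
  obtain ⟨f, hf⟩ := exists_continuousLinearMap_injective (E := E) hY
  obtain ⟨A, hA, hA_max⟩ := (isCompact_setOf_norm_comp_le_one hf).exists_isMaxOn
    (f := fun A ↦ |A.det|) ⟨0, by simp⟩ ContinuousLinearMap.continuous_det.abs.continuousOn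
  have hA_det : 0 < |A.det| := by
    let δ := (‖f‖ + 1)⁻¹
    have hδ : 0 < δ := by positivity
    have h_mem : ‖f ∘L (δ • ContinuousLinearMap.id ℝ E)‖ ≤ 1 := by
      rw [ContinuousLinearMap.comp_smul, norm_smul, f.comp_id, Real.norm_of_nonneg hδ.le,
        inv_mul_le_one₀ (by positivity)]
      linarith
    refine lt_of_lt_of_le ?_ (hA_max h_mem)
    simp [ContinuousLinearMap.det, hδ.ne']
  refine ⟨f ∘L A, hA, fun B hB ↦ ?_⟩
  have h_le : |A.det| * |B.det| ≤ |A.det| := by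
    rw [← abs_mul]
    simpa [ContinuousLinearMap.det] using hA_max (show ‖f ∘L (A ∘L B)‖ ≤ 1 from hB)
  exact (mul_le_iff_le_one_right hA_det).1 h_le

theorem IsJohnMap.abs_det_le_pow [NormedAddCommGroup E] [NormedSpace ℝ E] [FiniteDimensional ℝ E]
    {u : E →L[ℝ] Y} (hu : IsJohnMap u) {B : E →L[ℝ] E} {r : ℝ} (hr : 0 < r)
    (hB : ‖u ∘L B‖ ≤ r) : |B.det| ≤ r ^ Module.finrank ℝ E := by
  have h_scaled : ‖u ∘L (r⁻¹ • B)‖ ≤ 1 := by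
    rwa [ContinuousLinearMap.comp_smul, norm_smul, Real.norm_of_nonneg (by positivity),
      inv_mul_le_one₀ hr]
  have h_det : (r⁻¹ • B).det = r⁻¹ ^ Module.finrank ℝ E * B.det := by
    simp [ContinuousLinearMap.det]
  have h_le := hu.abs_det_le_one _ h_scaled
  rwa [h_det, abs_mul, abs_of_pos (by positivity), inv_pow, inv_mul_le_one₀ (by positivity)] at h_le

variable [NormedAddCommGroup E] [InnerProductSpace ℝ E] [FiniteDimensional ℝ E] {u : E →L[ℝ] Y}

theorem IsJohnMap.two_pow_finrank_le (hu : IsJohnMap u) {K : Submodule ℝ E} {r : ℝ} (hr : 0 ≤ r)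
    (hK : ∀ y ∈ K, ‖u y‖ ≤ r * ‖y‖) :
    2 ^ Module.finrank ℝ K ≤ (1 + r) ^ Module.finrank ℝ E := by
  let P := K.starProjection
  have hP : LinearMap.IsProj K (P : E →ₗ[ℝ] E) :=
    ⟨K.starProjection_apply_mem, fun _ ↦ Submodule.starProjection_eq_self_iff.2⟩
  have h_norm : ‖u ∘L (ContinuousLinearMap.id ℝ E + P)‖ ≤ 1 + r := by
    refine ContinuousLinearMap.opNorm_le_bound _ (by positivity) fun x ↦ ?_
    calc ‖u (x + P x)‖ ≤ ‖u x‖ + ‖u (P x)‖ := by simpa using norm_add_le (u x) (u (P x))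
      _ ≤ 1 * ‖x‖ + r * ‖P x‖ :=
        add_le_add (u.le_of_opNorm_le hu.norm_le_one x) (hK _ (hP.map_mem x))
      _ ≤ 1 * ‖x‖ + r * ‖x‖ := by
        gcongr
        simpa using P.le_of_opNorm_le K.starProjection_norm_le x
      _ = (1 + r) * ‖x‖ := by ring
  have h_det : (ContinuousLinearMap.id ℝ E + P).det = 2 ^ Module.finrank ℝ K :=
    det_id_add_of_isProj hP
  simpa [h_det] using hu.abs_det_le_pow (by positivity) h_norm

theorem IsJohnMap.exists_mem_norm_eq_one (hu : IsJohnMap u) {K : Submodule ℝ E} (hK : K ≠ ⊥)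
    (hK_dim : Module.finrank ℝ E ≤ 2 * Module.finrank ℝ K) :
    ∃ y ∈ K, ‖y‖ = 1 ∧ 1 / 4 ≤ ‖u y‖ := by
  by_contra! h_lt
  have h_le : ∀ y ∈ K, ‖u y‖ ≤ 1 / 4 * ‖y‖ := by
    intro y hy
    obtain rfl | hy₀ := eq_or_ne y 0
    · simp
    have h := h_lt (‖y‖⁻¹ • y) (K.smul_mem _ hy) (norm_smul_inv_norm (𝕜 := ℝ) hy₀)
    rw [map_smul, norm_smul, norm_inv, norm_norm, inv_mul_lt_iff₀ (norm_pos_iff.2 hy₀)] at h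
    linarith
  have h_pow : (2 : ℝ) ^ Module.finrank ℝ K ≤ (25 / 16) ^ Module.finrank ℝ K :=
    calc (2 : ℝ) ^ Module.finrank ℝ K ≤ (1 + 1 / 4) ^ Module.finrank ℝ E :=
          hu.two_pow_finrank_le (by norm_num) h_le
      _ ≤ (1 + 1 / 4) ^ (2 * Module.finrank ℝ K) := pow_le_pow_right₀ (by norm_num) hK_dim
      _ = (25 / 16) ^ Module.finrank ℝ K := by rw [pow_mul]; norm_num
  have h_pos : Module.finrank ℝ K ≠ 0 := by rwa [Ne, Submodule.finrank_eq_zero]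
  exact h_pow.not_gt (pow_lt_pow_left₀ (by norm_num) (by norm_num) h_pos)

theorem IsJohnMap.exists_orthonormal (hu : IsJohnMap u) (k : ℕ)
    (hk : 2 * k ≤ Module.finrank ℝ E) :
    ∃ v : Fin k → E, Orthonormal ℝ v ∧ ∀ i, 1 / 4 ≤ ‖u (v i)‖ := by
  induction k with
  | zero => exact ⟨Fin.elim0, .of_isEmpty _, fun i ↦ i.elim0⟩
  | succ k ih =>
    obtain ⟨v, hv, hv_large⟩ := ih (by lia)
    let S := Submodule.span ℝ (Set.range v)
    have h_dim : k + Module.finrank ℝ Sᗮ = Module.finrank ℝ E := by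
      simpa [S, finrank_span_eq_card hv.linearIndependent] using S.finrank_add_finrank_orthogonal
    have hS : Sᗮ ≠ ⊥ := by
      rw [Ne, ← Submodule.finrank_eq_zero (R := ℝ)]
      lia
    obtain ⟨y, hyS, hy_norm, hy_large⟩ := hu.exists_mem_norm_eq_one hS (by lia)
    refine ⟨Matrix.vecCons y v, orthonormal_vecCons_iff.2 ⟨hy_norm, fun i ↦ ?_, hv⟩, ?_⟩
    · exact S.inner_left_of_mem_orthogonal (Submodule.subset_span ⟨i, rfl⟩) hyS
    · exact Fin.cases hy_large hv_large

end IsJohnMap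

/-- All finite combinations of the family `y` with coefficients in `[-1, 1]` have norm at most `C`.
Such a bound holds for some `C` if and only if the series `∑ y i` is weakly unconditionally
Cauchy. -/
def UnconditionallyBoundedBy {ι Y : Type*} [SeminormedAddCommGroup Y] [NormedSpace ℝ Y] (C : ℝ)
    (y : ι → Y) : Prop :=
  ∀ (s : Finset ι) (c : ι → ℝ), (∀ i ∈ s, |c i| ≤ 1) → ‖∑ i ∈ s, c i • y i‖ ≤ C

namespace UnconditionallyBoundedBy

variable {ι κ Y Z : Type*} [SeminormedAddCommGroup Y] [NormedSpace ℝ Y]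
  [SeminormedAddCommGroup Z] [NormedSpace ℝ Z] {C : ℝ} {y : ι → Y}

theorem nonneg (hy : UnconditionallyBoundedBy C y) : 0 ≤ C := by
  simpa using hy ∅ 0

theorem map_of_opNorm_le (hy : UnconditionallyBoundedBy C y) {u : Y →L[ℝ] Z} {r : ℝ}
    (hu : ‖u‖ ≤ r) : UnconditionallyBoundedBy (r * C) (u ∘ y) := by
  intro s c hc
  have hr : 0 ≤ r := (norm_nonneg u).trans hu
  calc ‖∑ i ∈ s, c i • u (y i)‖ = ‖u (∑ i ∈ s, c i • y i)‖ := by simp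
    _ ≤ r * ‖∑ i ∈ s, c i • y i‖ := u.le_of_opNorm_le hu _
    _ ≤ r * C := by gcongr; exact hy s c hc

theorem comp_injective (hy : UnconditionallyBoundedBy C y) {t : κ → ι}
    (ht : Function.Injective t) : UnconditionallyBoundedBy C (y ∘ t) := by
  intro s c hc
  have h := hy (s.map ⟨t, ht⟩) (Function.extend t c 0) (by simpa [ht.extend_apply] using hc)
  simpa [ht.extend_apply] using h

theorem norm_sum_comp_le (hy : UnconditionallyBoundedBy C y) {s : Finset κ} {t : κ → ι}
    (ht : Set.InjOn t s) {c : κ → ℝ} (hc : ∀ i ∈ s, |c i| ≤ 1) :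
    ‖∑ i ∈ s, c i • y (t i)‖ ≤ C := by
  rw [← Finset.sum_coe_sort]
  exact hy.comp_injective ht.injective Finset.univ (fun i ↦ c i) fun i _ ↦ hc i i.2

theorem extend (hy : UnconditionallyBoundedBy C y) {t : ι → κ} (ht : Function.Injective t) :
    UnconditionallyBoundedBy C (Function.extend t y 0) := by
  intro s c hc
  rw [← Finset.sum_preimage t s ht.injOn (fun p ↦ c p • Function.extend t y 0 p)
    (fun p _ hp ↦ by rw [Function.extend_apply' _ _ _ hp]; simp)]
  simp only [ht.extend_apply]
  exact hy _ (c ∘ t) (by simpa using fun i ↦ hc (t i))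

theorem sigma {κ : ι → Type*} {C : ι → ℝ} {y : ∀ i, κ i → Y}
    (hy : ∀ i, UnconditionallyBoundedBy (C i) (y i)) (hC : Summable C) :
    UnconditionallyBoundedBy (∑' i, C i) (fun p : Σ i, κ i ↦ y p.1 p.2) := by
  classical
  intro s c hc
  rw [← s.sigma_image_fst_preimage_mk, Finset.sum_sigma]
  refine (norm_sum_le _ _).trans ((Finset.sum_le_sum fun i _ ↦ ?_).trans
    (hC.sum_le_tsum (s.image Sigma.fst) fun i _ ↦ (hy i).nonneg))
  exact hy i _ (fun j ↦ c ⟨i, j⟩) (by simpa using fun j ↦ hc ⟨i, j⟩)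

theorem of_orthonormal {E : Type*} [SeminormedAddCommGroup E] [InnerProductSpace ℝ E] [Fintype ι]
    {v : ι → E} (hv : Orthonormal ℝ v) : UnconditionallyBoundedBy √(Fintype.card ι) v := by
  intro s c hc
  refine Real.le_sqrt_of_sq_le ?_
  calc ‖∑ i ∈ s, c i • v i‖ ^ 2 = ∑ i ∈ s, c i ^ 2 := by
        rw [← real_inner_self_eq_norm_sq, hv.inner_sum]
        simp [sq]
    _ ≤ ∑ i ∈ s, 1 := Finset.sum_le_sum fun i hi ↦ (sq_le_one_iff_abs_le_one _).2 (hc i hi)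
    _ ≤ Fintype.card ι := by simpa using s.card_le_univ

end UnconditionallyBoundedBy

section DvoretzkyRogers

variable {Y : Type*} [NormedAddCommGroup Y] [NormedSpace ℝ Y]

theorem exists_unconditionallyBoundedBy_sqrt (hY : ¬ FiniteDimensional ℝ Y) (n : ℕ) :
    ∃ y : Fin n → Y, UnconditionallyBoundedBy √n y ∧ ∀ i, 1 / 4 ≤ ‖y i‖ := by
  obtain ⟨u, hu⟩ := exists_isJohnMap (E := EuclideanSpace ℝ (Fin (2 * n))) hY
  obtain ⟨v, hv, hv_large⟩ := hu.exists_orthonormal n (by simp)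
  refine ⟨u ∘ v, ?_, hv_large⟩
  simpa using (UnconditionallyBoundedBy.of_orthonormal hv).map_of_opNorm_le hu.norm_le_one

theorem exists_unconditionallyBoundedBy_half_pow (hY : ¬ FiniteDimensional ℝ Y) (k : ℕ) :
    ∃ y : Fin (4 ^ k) → Y, UnconditionallyBoundedBy ((1 / 2) ^ k) y ∧ 1 / 4 ≤ ∑ i, ‖y i‖ := by
  obtain ⟨y, hy, hy_large⟩ := exists_unconditionallyBoundedBy_sqrt hY (4 ^ k)
  let u : Y →L[ℝ] Y := (1 / 4 : ℝ) ^ k • ContinuousLinearMap.id ℝ Y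
  have hu : ‖u‖ ≤ (1 / 4) ^ k :=
    u.opNorm_le_bound (by positivity) fun x ↦ by simp [u, norm_smul]
  have h_const : (1 / 4 : ℝ) ^ k * √(4 ^ k : ℕ) = (1 / 2) ^ k := by
    have h_sqrt : √(4 ^ k : ℕ) = 2 ^ k := by
      rw [Real.sqrt_eq_iff_eq_sq (by positivity) (by positivity), ← pow_mul, mul_comm k, pow_mul]
      norm_num
    rw [h_sqrt, ← mul_pow]
    norm_num
  refine ⟨u ∘ y, h_const ▸ hy.map_of_opNorm_le hu, ?_⟩
  calc (1 / 4 : ℝ) = ∑ _i : Fin (4 ^ k), (1 / 4) ^ k * (1 / 4) := by simp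
    _ ≤ ∑ i, ‖u (y i)‖ := by
      gcongr with i
      simpa [u, norm_smul] using hy_large i

theorem exists_unconditionallyBoundedBy_not_summable_norm (hY : ¬ FiniteDimensional ℝ Y) :
    ∃ (C : ℝ) (y : ℕ → Y), UnconditionallyBoundedBy C y ∧ ¬ Summable fun i ↦ ‖y i‖ := by
  choose y hy hy_large using exists_unconditionallyBoundedBy_half_pow hY
  let z : (Σ k, Fin (4 ^ k)) → Y := fun p ↦ y p.1 p.2
  have hz : ¬ Summable fun p ↦ ‖z p‖ := by
    intro h
    have h_block : Summable fun k ↦ ∑ i, ‖y k i‖ := by simpa [z] using h.sigma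
    have h_quarter : (1 / 4 : ℝ) ≤ 0 := ge_of_tendsto' h_block.tendsto_atTop_zero hy_large
    norm_num at h_quarter
  have h_inj := Encodable.encode_injective (α := Σ k, Fin (4 ^ k))
  refine ⟨_, Function.extend Encodable.encode z 0,
    (UnconditionallyBoundedBy.sigma hy summable_geometric_two).extend h_inj, fun h ↦ hz ?_⟩
  simpa [Function.comp_def, h_inj.extend_apply] using h.comp_injective h_inj

end DvoretzkyRogers

section Variation

variable {E : Type*} [NormedAddCommGroup E] {a b : ℝ}

theorem ofReal_sum_norm_sub_le_evar (G : ℝ → E) {h : ℕ → ℝ} (h_mono : StrictMono h)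
    (h_zero : h 0 = a) (h_lt : ∀ j, h j < b) (n : ℕ) :
    ENNReal.ofReal (∑ j ∈ Finset.range n, ‖G (h (j + 1)) - G (h j)‖) ≤ evar a b G := by
  let α : ℕ → ℝ := fun j ↦ if j ≤ n then h j else b
  have hα : IsDivision a b (n + 1) α := by
    refine ⟨by simp [α, h_zero], by simp [α], fun i hi ↦ ?_⟩
    obtain rfl | hi' := (Nat.lt_succ_iff.1 hi).eq_or_lt
    · simpa [α] using h_lt i
    · simpa [α, hi'.le, Nat.succ_le_of_lt hi'] using h_mono i.lt_succ_self
  refine le_trans (ENNReal.ofReal_le_ofReal ?_) (le_iSup_of_le (n + 1) (le_iSup₂_of_le α hα le_rfl))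
  calc ∑ j ∈ Finset.range n, ‖G (h (j + 1)) - G (h j)‖
      = ∑ j ∈ Finset.range n, ‖G (α (j + 1)) - G (α j)‖ := by
        refine Finset.sum_congr rfl fun j hj ↦ ?_
        have hj' := Finset.mem_range.1 hj
        simp [α, hj'.le, Nat.succ_le_of_lt hj']
    _ ≤ ∑ j ∈ Finset.range (n + 1), ‖G (α (j + 1)) - G (α j)‖ :=
        Finset.sum_le_sum_of_subset_of_nonneg (Finset.range_subset_range.2 n.le_succ)
          fun _ _ _ ↦ norm_nonneg _

theorem evar_eq_top_of_not_summable {G : ℝ → E} {h : ℕ → ℝ} (h_mono : StrictMono h)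
    (h_zero : h 0 = a) (h_lt : ∀ j, h j < b)
    (hG : ¬ Summable fun j ↦ ‖G (h (j + 1)) - G (h j)‖) : evar a b G = ⊤ := by
  have h_tendsto := ENNReal.tendsto_ofReal_atTop.comp
    ((not_summable_iff_tendsto_nat_atTop_of_nonneg fun _ ↦ norm_nonneg _).1 hG)
  exact top_unique (le_of_tendsto' h_tendsto (ofReal_sum_norm_sub_le_evar G h_mono h_zero h_lt))

theorem exists_injective_evar_extend_eq_top (hab : a < b) {y : ℕ → E}
    (hy : ¬ Summable fun i ↦ ‖y i‖) :
    ∃ t : ℕ → ℝ, Function.Injective t ∧ evar a b (Function.extend t y 0) = ⊤ := by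
  obtain ⟨h, h_mono, h_zero⟩ := Nat.exists_strictMono' (⟨a, Set.left_mem_Ico.2 hab⟩ : Set.Ico a b)
  have h_mono' : StrictMono fun j ↦ (h j : ℝ) := h_mono
  let t : ℕ → ℝ := fun i ↦ h (2 * i + 1)
  have ht : Function.Injective t := fun i j hij ↦ by simpa using h_mono'.injective hij
  refine ⟨t, ht, evar_eq_top_of_not_summable h_mono' (by simp [h_zero]) (fun j ↦ (h j).2.2)
    fun h_sum ↦ hy ?_⟩
  have h_odd : ∀ i, Function.extend t y 0 (h (2 * i + 1)) = y i := ht.extend_apply y 0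
  have h_even : ∀ i, Function.extend t y 0 (h (2 * i)) = 0 := fun i ↦ by
    refine Function.extend_apply' _ _ _ fun ⟨j, hj⟩ ↦ ?_
    have := h_mono'.injective hj
    lia
  simpa [Function.comp_def, h_odd, h_even] using
    h_sum.comp_injective (mul_right_injective₀ (two_ne_zero (α := ℕ)))

end Variation

theorem IsDivision.strictMonoOn {a b : ℝ} {n : ℕ} {α : ℕ → ℝ} (hα : IsDivision a b n α) :
    StrictMonoOn α (Set.Iic n) :=
  strictMonoOn_Iic_of_lt_succ hα.2.2

section SmulRight

variable {X Y : Type*} [NormedAddCommGroup X] [NormedSpace ℝ X]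
  [NormedAddCommGroup Y] [NormedSpace ℝ Y] {a b : ℝ}

theorem semivar_smulRight_le {C : ℝ} {g : ℝ → Y} (hg : UnconditionallyBoundedBy C g)
    {φ : StrongDual ℝ X} (hφ : ‖φ‖ ≤ 1) :
    semivar a b (fun t ↦ φ.smulRight (g t)) ≤ ENNReal.ofReal (C + C) := by
  refine iSup₂_le fun n α ↦ iSup_le fun hα ↦ iSup₂_le fun x hx ↦ ENNReal.ofReal_le_ofReal ?_
  have hφx : ∀ j ∈ Finset.range n, |φ (x j)| ≤ 1 := fun j _ ↦
    (φ.le_of_opNorm_le_of_le hφ (hx j)).trans_eq (one_mul 1)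
  have h_left : Set.InjOn α (Finset.range n) :=
    hα.strictMonoOn.injOn.mono fun j hj ↦ by
      simp only [Finset.coe_range, Set.mem_Iio, Set.mem_Iic] at hj ⊢
      lia
  have h_right : Set.InjOn (fun j ↦ α (j + 1)) (Finset.range n) :=
    hα.strictMonoOn.injOn.comp (add_left_injective 1).injOn fun j hj ↦ by
      simp only [Finset.coe_range, Set.mem_Iio, Set.mem_Iic] at hj ⊢
      lia
  calc ‖∑ j ∈ Finset.range n, (φ.smulRight (g (α (j + 1))) - φ.smulRight (g (α j))) (x j)‖
      = ‖∑ j ∈ Finset.range n, φ (x j) • g (α (j + 1)) -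
          ∑ j ∈ Finset.range n, φ (x j) • g (α j)‖ := by simp
    _ ≤ C + C := (norm_sub_le _ _).trans
        (add_le_add (hg.norm_sum_comp_le h_right hφx) (hg.norm_sum_comp_le h_left hφx))

theorem evar_smulRight (g : ℝ → Y) {φ : StrongDual ℝ X} (hφ : ‖φ‖ = 1) :
    evar a b (fun t ↦ φ.smulRight (g t)) = evar a b g := by
  have h_norm : ∀ y z : Y, ‖φ.smulRight y - φ.smulRight z‖ = ‖y - z‖ := fun y z ↦ by
    have h_sub : φ.smulRight y - φ.smulRight z = φ.smulRight (y - z) := by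
      ext
      simp [smul_sub]
    rw [h_sub, φ.norm_smulRight_apply, hφ, one_mul]
  simp only [evar, h_norm]

end SmulRight

theorem exists_semivar_lt_top_evar_eq_top_general
    {X Y : Type*} [NormedAddCommGroup X] [NormedSpace ℝ X] [Nontrivial X]
    [NormedAddCommGroup Y] [NormedSpace ℝ Y]
    (hY : ¬ FiniteDimensional ℝ Y) (a b : ℝ) (hab : a < b) :
    ∃ F : ℝ → X →L[ℝ] Y, semivar a b F < ⊤ ∧ evar a b F = ⊤ := by
  obtain ⟨C, y, hy, hy_norm⟩ := exists_unconditionallyBoundedBy_not_summable_norm hY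
  obtain ⟨t, ht, ht_evar⟩ := exists_injective_evar_extend_eq_top hab hy_norm
  obtain ⟨φ, hφ, -⟩ := exists_dual_vector' ℝ (0 : X)
  refine ⟨fun s ↦ φ.smulRight (Function.extend t y 0 s), ?_, ?_⟩
  · exact (semivar_smulRight_le (hy.extend ht) hφ.le).trans_lt ENNReal.ofReal_lt_top
  · rw [evar_smulRight _ hφ, ht_evar]

/-- if `X ≠ 0` and `Y` is infinite-dimensional, then there exists
`F : [a,b] → L(X,Y)` of bounded semivariation whose variation is infinite. -/
theorem exists_semivar_lt_top_evar_eq_top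
    {X Y : Type*} [NormedAddCommGroup X] [NormedSpace ℝ X] [CompleteSpace X] [Nontrivial X]
    [NormedAddCommGroup Y] [NormedSpace ℝ Y] [CompleteSpace Y]
    (hY : ¬ FiniteDimensional ℝ Y)
    (a b : ℝ) (hab : a < b) :
    ∃ F : ℝ → X →L[ℝ] Y, semivar a b F < ⊤ ∧ evar a b F = ⊤ :=
  exists_semivar_lt_top_evar_eq_top_general hY a b hab
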